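/- Suppose ξ = 2πp/q, where p and q are coprime positive integers with 0 < p/q < 1/2. Fix an integer ℓ ≥ 0 and δ ≠ 0, and assume C₁(ℓ)² + C₂(ℓ)² > 0. Then, for every choice, for each N, of a unit eigenvector u_N of H(δ)H(δ)ᵀ corresponding to its largest eigenvalue, the real sequence N ↦ r_{N−1−ℓ}(N) has at least two distinct limit (cluster) points; in particular it does not converge. -/

import Mathlib

open Filter Matrix

/-- Hankelization (diagonal averaging): the `j`-th value is the average of the
entries `Y i k` with `i + k = j`. -/
noncomputable def hankelize {L K : ℕ} (Y : Matrix (Fin L) (Fin K) ℝ) (j : ℕ) : ℝ :=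
  (∑ i : Fin L, ∑ k : Fin K, if (i : ℕ) + (k : ℕ) = j then Y i k else 0) /
  (∑ i : Fin L, ∑ k : Fin K, if (i : ℕ) + (k : ℕ) = j then (1 : ℝ) else 0)

/-- The `L × K` Hankel (trajectory) matrix of a series `x`. -/
noncomputable def hankelOf (x : ℕ → ℝ) (L K : ℕ) : Matrix (Fin L) (Fin K) ℝ :=
  Matrix.of fun i k => x ((i : ℕ) + (k : ℕ))

/-- Squared Euclidean norm of a vector. -/
noncomputable def normSq {M : ℕ} (w : Fin M → ℝ) : ℝ := ∑ i, w i ^ 2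

/-- `u` is a unit eigenvector of `A` corresponding to its largest eigenvalue. -/
def IsTopEigenvector {L : ℕ} (A : Matrix (Fin L) (Fin L) ℝ) (u : Fin L → ℝ) : Prop :=
  normSq u = 1 ∧ ∃ μ : ℝ, A.mulVec u = μ • u ∧
    ∀ (ν : ℝ) (v : Fin L → ℝ), v ≠ 0 → A.mulVec v = ν • v → ν ≤ μ

/-- The exponential signal `x_n = a^n`. -/
noncomputable def expSignal (a : ℝ) : ℕ → ℝ := fun n => a ^ n

/-- The harmonic noise `e_n = cos (ξ n + φ)`. -/
noncomputable def cosNoise (ξ φ : ℝ) : ℕ → ℝ := fun n => Real.cos (ξ * (n : ℝ) + φ)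

/-- The vector `W_M = (1, a, …, a^{M-1})ᵀ`. -/
noncomputable def Wvec (a : ℝ) (M : ℕ) : Fin M → ℝ := fun i => a ^ (i : ℕ)

/-- `ρ_j = (𝒮(P₀ E Hᵀ S₀ H))_j + (𝒮(P₀⊥ E))_j`. -/
noncomputable def rho (a ξ φ : ℝ) (L K : ℕ) (j : ℕ) : ℝ :=
  let H := hankelOf (expSignal a) L K
  let E := hankelOf (cosNoise ξ φ) L K
  let P0perp : Matrix (Fin L) (Fin L) ℝ :=
    (normSq (Wvec a L))⁻¹ • Matrix.vecMulVec (Wvec a L) (Wvec a L)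
  let P0 : Matrix (Fin L) (Fin L) ℝ := 1 - P0perp
  let S0 : Matrix (Fin L) (Fin L) ℝ :=
    ((normSq (Wvec a L)) ^ 2 * normSq (Wvec a K))⁻¹ • Matrix.vecMulVec (Wvec a L) (Wvec a L)
  hankelize (P0 * E * Hᵀ * S0 * H) j + hankelize (P0perp * E) j

/-- The matrix `H(δ)H(δ)ᵀ` for the perturbed series `a^n + δ cos(ξ n + φ)`. -/
noncomputable def HdeltaSq (a ξ φ δ : ℝ) (L K : ℕ) : Matrix (Fin L) (Fin L) ℝ :=
  let Hδ := hankelOf (expSignal a) L K + δ • hankelOf (cosNoise ξ φ) L K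
  Hδ * Hδᵀ

/-- The SSA reconstruction error `r_j = (𝒮(u uᵀ H(δ)))_j - a^j`. -/
noncomputable def recErr (a ξ φ δ : ℝ) (L K : ℕ) (u : Fin L → ℝ) (j : ℕ) : ℝ :=
  hankelize (Matrix.vecMulVec u u *
    (hankelOf (expSignal a) L K + δ • hankelOf (cosNoise ξ φ) L K)) j - a ^ j

/-- `G(a,ξ) = (a²-1)/(a(a²+1-2a cos ξ))`. -/
noncomputable def Gfun (a ξ : ℝ) : ℝ := (a ^ 2 - 1) / (a * (a ^ 2 + 1 - 2 * a * Real.cos ξ))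

/-- The coefficient `C₁(ℓ)`. -/
noncomputable def C1 (a ξ : ℝ) (ℓ : ℕ) : ℝ :=
  (2 / (1 + (ℓ : ℝ))) * (a * Real.cos ((ℓ : ℝ) * ξ) - a ^ (-(ℓ : ℤ)) * Real.cos ξ)
  - (a ^ 2 + 1 - 2 * a * Real.cos ξ - 2 * Real.sin ξ ^ 2) * Gfun a ξ * a ^ (-(ℓ : ℤ))

/-- The coefficient `C₂(ℓ)`. -/
noncomputable def C2 (a ξ : ℝ) (ℓ : ℕ) : ℝ :=
  (2 / (1 + (ℓ : ℝ))) * (a * Real.sin ((ℓ : ℝ) * ξ) + a ^ (-(ℓ : ℤ)) * Real.sin ξ)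
  - 2 * Real.sin ξ * (a - Real.cos ξ) * Gfun a ξ * a ^ (-(ℓ : ℤ))

/-- `D(ℓ) = G(a,ξ)·√(C₁(ℓ)² + C₂(ℓ)²)`. -/
noncomputable def Dfun (a ξ : ℝ) (ℓ : ℕ) : ℝ :=
  Gfun a ξ * Real.sqrt (C1 a ξ ℓ ^ 2 + C2 a ξ ℓ ^ 2)

/-!
The signal matrix `H = x yᵀ` has rank one and norm of order `a ^ N`, while the noise matrix has
norm at most `N`. Write `Q_w` for the orthogonal projection onto `w^⊥`. If `u`, `v` are the top
singular vectors of `H(δ)`, then `Q_u H(δ) = Q_u H(δ) Q_v`, and expanding around `u ∥ x`, `v ∥ y`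
gives `Q_u H(δ) = δ Q_x E Q_y + O(N² a^{-N})`. Hence the reconstruction error is
`δ 𝒮(E - Q_x E Q_y)` up to a null sequence.

Reading the series from its end turns `x`, `y` into geometric vectors of ratio `a⁻¹` and the noise
into `Re (p z^r)` with `z = e^{-iξ}`, so the error at distance `ℓ` from the end is
`Re (e^{iξN} w_N)`, where `w_N` is an explicit rational expression in truncated geometric series
and converges to `w = δ e^{i(φ-ξ)} G (C₁ - i C₂) ≠ 0`. The sequence `Re (e^{iξN} w)` is bounded and
does not converge, as it satisfies a second-order recurrence that forces any limit to vanish while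
`|e^{iξN} w|` is constant. By compactness there are two cluster points.
-/

open scoped Topology

section TwoClusterPoints

lemma exists_ne_mapClusterPt_of_not_tendsto {ι X : Type*} [TopologicalSpace X] {f : Filter ι}
    [f.NeBot] {g : ι → X} {s : Set X} (hs : IsCompact s) (hg : ∀ᶠ i in f, g i ∈ s)
    (hlim : ¬ ∃ l, Tendsto g f (𝓝 l)) :
    ∃ x y, x ≠ y ∧ MapClusterPt x f g ∧ MapClusterPt y f g := by
  obtain ⟨x, -, hx⟩ := hs.exists_mapClusterPt (le_principal_iff.2 hg)
  by_contra! h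
  exact hlim ⟨x, hs.tendsto_nhds_of_unique_mapClusterPt hg fun y _ hy =>
    by_contra fun hne => h x y (Ne.symm hne) hx hy⟩

lemma re_sq_add_im_sq (z : ℂ) : z.re ^ 2 + z.im ^ 2 = ‖z‖ ^ 2 := by
  rw [Complex.sq_norm, Complex.normSq_apply, sq, sq]

lemma re_pow_add_two_mul {ζ : ℂ} (hζ : ‖ζ‖ = 1) (w : ℂ) (n : ℕ) :
    (ζ ^ (n + 2) * w).re = 2 * ζ.re * (ζ ^ (n + 1) * w).re - (ζ ^ n * w).re := by
  have hsq : ζ.re ^ 2 + ζ.im ^ 2 = 1 := by rw [re_sq_add_im_sq, hζ, one_pow]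
  simp only [pow_succ, Complex.mul_re, Complex.mul_im]
  linear_combination -(w.re * (ζ ^ n).re - w.im * (ζ ^ n).im) * hsq

lemma im_mul_im_pow_mul (ζ w : ℂ) (n : ℕ) :
    ζ.im * (ζ ^ n * w).im = ζ.re * (ζ ^ n * w).re - (ζ ^ (n + 1) * w).re := by
  simp only [pow_succ, Complex.mul_re, Complex.mul_im]
  ring

lemma not_tendsto_re_pow_mul {ζ w : ℂ} (hζ : ‖ζ‖ = 1) (hζim : ζ.im ≠ 0) (hw : w ≠ 0) (l : ℝ) :
    ¬ Tendsto (fun n : ℕ => (ζ ^ n * w).re) atTop (𝓝 l) := by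
  intro h
  have h₁ := (tendsto_add_atTop_iff_nat 1).2 h
  have h₂ := (tendsto_add_atTop_iff_nat 2).2 h
  have hre_lt : ζ.re < 1 := by
    have hsq := re_sq_add_im_sq ζ
    rw [hζ] at hsq
    nlinarith [sq_pos_of_ne_zero hζim]
  have hl : l = 0 := by
    have hrec : l = 2 * ζ.re * l - l := tendsto_nhds_unique h₂
      (((h₁.const_mul (2 * ζ.re)).sub h).congr fun n => (re_pow_add_two_mul hζ w n).symm)
    nlinarith
  subst hl
  have him : Tendsto (fun n : ℕ => (ζ ^ n * w).im) atTop (𝓝 0) := by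
    have hscaled := ((h.const_mul ζ.re).sub h₁).const_mul ζ.im⁻¹
    simp only [mul_zero, sub_zero] at hscaled
    refine hscaled.congr fun n => ?_
    rw [← im_mul_im_pow_mul, inv_mul_cancel_left₀ hζim]
  have hnorm : Tendsto (fun n : ℕ => ‖ζ ^ n * w‖ ^ 2) atTop (𝓝 (0 ^ 2 + 0 ^ 2)) :=
    ((h.pow 2).add (him.pow 2)).congr fun n => re_sq_add_im_sq _
  simp only [norm_mul, norm_pow, hζ, one_pow, one_mul] at hnorm
  have hw_sq : ‖w‖ ^ 2 = 0 ^ 2 + 0 ^ 2 := tendsto_nhds_unique tendsto_const_nhds hnorm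
  simp [hw] at hw_sq

theorem exists_ne_mapClusterPt_of_tendsto_sub_re_pow_mul {x : ℕ → ℝ} {ζ w : ℂ} (hζ : ‖ζ‖ = 1)
    (hζim : ζ.im ≠ 0) (hw : w ≠ 0)
    (hx : Tendsto (fun n => x n - (ζ ^ n * w).re) atTop (𝓝 0)) :
    (∃ s t, s ≠ t ∧ MapClusterPt s atTop x ∧ MapClusterPt t atTop x) ∧
      ¬ ∃ l, Tendsto x atTop (𝓝 l) := by
  have hlim : ¬ ∃ l, Tendsto x atTop (𝓝 l) := fun ⟨l, hl⟩ =>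
    not_tendsto_re_pow_mul hζ hζim hw (l - 0) ((hl.sub hx).congr fun n => sub_sub_cancel _ _)
  refine ⟨exists_ne_mapClusterPt_of_not_tendsto
    (isCompact_closedBall (0 : ℝ) (1 + ‖w‖)) ?_ hlim, hlim⟩
  filter_upwards [hx.eventually (Metric.closedBall_mem_nhds 0 one_pos)] with n hn
  rw [dist_zero_right] at hn
  rw [mem_closedBall_zero_iff]
  have hre : ‖(ζ ^ n * w).re‖ ≤ ‖w‖ := by
    simpa [hζ] using Complex.abs_re_le_norm (ζ ^ n * w)
  linarith [norm_le_norm_sub_add (x n) (ζ ^ n * w).re]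

end TwoClusterPoints

section PerpProj

open InnerProductSpace ContinuousLinearMap
open scoped InnerProductSpace

variable {𝕜 X Y : Type*} [RCLike 𝕜]
  [NormedAddCommGroup X] [InnerProductSpace 𝕜 X] [NormedAddCommGroup Y] [InnerProductSpace 𝕜 Y]

variable (𝕜) in
/-- The orthogonal projection onto the orthogonal complement of the line spanned by `x`. -/
noncomputable def perpProj (x : X) : X →L[𝕜] X := (Submodule.span 𝕜 {x})ᗮ.starProjection

lemma perpProj_apply_self (x : X) : perpProj 𝕜 x x = 0 :=
  Submodule.starProjection_orthogonalComplement_singleton_eq_zero x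

lemma norm_perpProj_le (x : X) : ‖perpProj 𝕜 x‖ ≤ 1 := Submodule.starProjection_norm_le _

lemma norm_perpProj_apply_le (x z : X) : ‖perpProj 𝕜 x z‖ ≤ ‖z‖ :=
  Submodule.norm_starProjection_apply_le _ z

lemma adjoint_perpProj [CompleteSpace X] (x : X) : adjoint (perpProj 𝕜 x) = perpProj 𝕜 x :=
  isSelfAdjoint_starProjection _

lemma one_sub_perpProj (x : X) :
    1 - perpProj 𝕜 x = rankOne 𝕜 x ((((‖x‖ ^ 2)⁻¹ : ℝ) : 𝕜) • x) := by
  ext z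
  rw [perpProj, Submodule.starProjection_orthogonal', sub_sub_cancel,
    Submodule.starProjection_singleton, rankOne_apply, inner_smul_left, RCLike.conj_ofReal,
    div_eq_inv_mul, RCLike.ofReal_inv]

lemma norm_perpProj_apply_sq_mul (x z : X) :
    ‖perpProj 𝕜 x z‖ ^ 2 * ‖x‖ ^ 2 = ‖x‖ ^ 2 * ‖z‖ ^ 2 - ‖⟪x, z⟫_𝕜‖ ^ 2 := by
  have pythagoras := Submodule.norm_sq_eq_add_norm_sq_starProjection z (Submodule.span 𝕜 {x})
  rw [Submodule.starProjection_singleton, norm_smul, norm_div, RCLike.norm_ofReal,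
    abs_of_nonneg (by positivity), ← perpProj] at pythagoras
  rcases eq_or_ne x 0 with rfl | hx
  · simp
  · rw [pythagoras]
    field_simp
    ring

lemma norm_perpProj_apply_mul_norm_comm (x z : X) :
    ‖perpProj 𝕜 x z‖ * ‖x‖ = ‖perpProj 𝕜 z x‖ * ‖z‖ := by
  refine (pow_left_inj₀ (by positivity) (by positivity) two_ne_zero).1 ?_
  rw [mul_pow, mul_pow, norm_perpProj_apply_sq_mul, norm_perpProj_apply_sq_mul, norm_inner_symm,
    mul_comm (‖x‖ ^ 2)]

lemma norm_perpProj_apply_le_mul_symm {x z : X} (hz : z ≠ 0) {θ : ℝ}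
    (h : ‖perpProj 𝕜 x z‖ ≤ θ * ‖z‖) : ‖perpProj 𝕜 z x‖ ≤ θ * ‖x‖ := by
  refine le_of_mul_le_mul_right ?_ (norm_pos_iff.2 hz)
  calc ‖perpProj 𝕜 z x‖ * ‖z‖ = ‖perpProj 𝕜 x z‖ * ‖x‖ :=
        (norm_perpProj_apply_mul_norm_comm x z).symm
    _ ≤ θ * ‖z‖ * ‖x‖ := by gcongr
    _ = θ * ‖x‖ * ‖z‖ := by ring

lemma norm_perpProj_comp_one_sub_perpProj_le {x z : X} (hz : z ≠ 0) {θ : ℝ}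
    (h : ‖perpProj 𝕜 x z‖ ≤ θ * ‖z‖) : ‖perpProj 𝕜 x ∘L (1 - perpProj 𝕜 z)‖ ≤ θ := by
  rw [one_sub_perpProj, comp_rankOne, norm_rankOne, norm_smul, RCLike.norm_ofReal,
    abs_of_nonneg (by positivity)]
  calc ‖perpProj 𝕜 x z‖ * ((‖z‖ ^ 2)⁻¹ * ‖z‖) ≤ θ * ‖z‖ * ((‖z‖ ^ 2)⁻¹ * ‖z‖) := by gcongr
    _ = θ := by field_simp

lemma norm_perpProj_sub_perpProj_le [CompleteSpace X] {x z : X} (hx : x ≠ 0) (hz : z ≠ 0) {θ : ℝ}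
    (h : ‖perpProj 𝕜 x z‖ ≤ θ * ‖z‖) : ‖perpProj 𝕜 z - perpProj 𝕜 x‖ ≤ 2 * θ := by
  have decomposition : perpProj 𝕜 z - perpProj 𝕜 x
      = (1 - perpProj 𝕜 x) ∘L perpProj 𝕜 z - perpProj 𝕜 x ∘L (1 - perpProj 𝕜 z) := by
    ext y
    simp
  have norm_left : ‖(1 - perpProj 𝕜 x) ∘L perpProj 𝕜 z‖ ≤ θ := by
    rw [← LinearIsometryEquiv.norm_map adjoint, adjoint_comp, map_sub, adjoint_perpProj,
      adjoint_perpProj, adjoint_one]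
    exact norm_perpProj_comp_one_sub_perpProj_le hx (norm_perpProj_apply_le_mul_symm hz h)
  calc ‖perpProj 𝕜 z - perpProj 𝕜 x‖
      ≤ ‖(1 - perpProj 𝕜 x) ∘L perpProj 𝕜 z‖ + ‖perpProj 𝕜 x ∘L (1 - perpProj 𝕜 z)‖ :=
        decomposition ▸ norm_sub_le _ _
    _ ≤ 2 * θ := by linarith [norm_perpProj_comp_one_sub_perpProj_le hz h]

lemma perpProj_comp_rankOne_add_comp_perpProj_sub [CompleteSpace Y] (E : Y →L[𝕜] X) (x u : X)
    (y v : Y) :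
    perpProj 𝕜 u ∘L (rankOne 𝕜 x y + E) ∘L perpProj 𝕜 v - perpProj 𝕜 x ∘L E ∘L perpProj 𝕜 y
      = rankOne 𝕜 (perpProj 𝕜 u x) (perpProj 𝕜 v y)
        + (perpProj 𝕜 u - perpProj 𝕜 x) ∘L E ∘L perpProj 𝕜 v
        + perpProj 𝕜 x ∘L E ∘L (perpProj 𝕜 v - perpProj 𝕜 y) := by
  have h : rankOne 𝕜 (perpProj 𝕜 u x) (perpProj 𝕜 v y)
      = perpProj 𝕜 u ∘L rankOne 𝕜 x y ∘L perpProj 𝕜 v := by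
    rw [rankOne_comp, comp_rankOne, adjoint_perpProj]
  rw [h]
  simp only [add_comp, comp_add, sub_comp, comp_sub]
  abel

lemma norm_perpProj_comp_comp_perpProj_sub_le [CompleteSpace X] [CompleteSpace Y]
    (E : Y →L[𝕜] X) {x u : X} {y v : Y} (hx : x ≠ 0) (hy : y ≠ 0) (hu : u ≠ 0) (hv : v ≠ 0)
    {θ : ℝ} (hxu : ‖perpProj 𝕜 x u‖ ≤ θ * ‖u‖) (hyv : ‖perpProj 𝕜 y v‖ ≤ θ * ‖v‖) :
    ‖perpProj 𝕜 u ∘L (rankOne 𝕜 x y + E) ∘L perpProj 𝕜 v - perpProj 𝕜 x ∘L E ∘L perpProj 𝕜 y‖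
      ≤ θ ^ 2 * (‖x‖ * ‖y‖) + 4 * θ * ‖E‖ := by
  have hθ : 0 ≤ θ :=
    nonneg_of_mul_nonneg_left ((norm_nonneg _).trans hxu) (norm_pos_iff.2 hu)
  have rankOne_le : ‖rankOne 𝕜 (perpProj 𝕜 u x) (perpProj 𝕜 v y)‖ ≤ θ * ‖x‖ * (θ * ‖y‖) := by
    rw [norm_rankOne]
    gcongr
    exacts [norm_perpProj_apply_le_mul_symm hu hxu, norm_perpProj_apply_le_mul_symm hv hyv]
  have left_le : ‖(perpProj 𝕜 u - perpProj 𝕜 x) ∘L E ∘L perpProj 𝕜 v‖ ≤ 2 * θ * (‖E‖ * 1) := by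
    refine (opNorm_comp_le _ _).trans ?_
    gcongr
    exacts [norm_perpProj_sub_perpProj_le hx hu hxu,
      (opNorm_comp_le _ _).trans (by gcongr; exact norm_perpProj_le v)]
  have right_le : ‖perpProj 𝕜 x ∘L E ∘L (perpProj 𝕜 v - perpProj 𝕜 y)‖ ≤ 1 * (‖E‖ * (2 * θ)) := by
    refine (opNorm_comp_le _ _).trans ?_
    gcongr
    exacts [norm_perpProj_le x, (opNorm_comp_le _ _).trans
      (by gcongr; exact norm_perpProj_sub_perpProj_le hy hv hyv)]
  rw [perpProj_comp_rankOne_add_comp_perpProj_sub]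
  refine norm_add₃_le.trans ?_
  linarith

end PerpProj

section RankOnePerturbation

open InnerProductSpace ContinuousLinearMap
open scoped InnerProductSpace

variable {𝕜 X Y : Type*} [RCLike 𝕜]
  [NormedAddCommGroup X] [InnerProductSpace 𝕜 X] [CompleteSpace X]
  [NormedAddCommGroup Y] [InnerProductSpace 𝕜 Y] [CompleteSpace Y]
  {A E : Y →L[𝕜] X} {x u : X} {y : Y} {μ : 𝕜}

lemma norm_adjoint_apply_sq_of_eigenvector (hu : ‖u‖ = 1) (heig : A (adjoint A u) = μ • u) :
    ((‖adjoint A u‖ ^ 2 : ℝ) : 𝕜) = μ := by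
  rw [RCLike.ofReal_pow, ← inner_self_eq_norm_sq_to_K (𝕜 := 𝕜), adjoint_inner_left, heig,
    inner_smul_right, inner_self_eq_norm_sq_to_K, hu]
  simp

lemma norm_perpProj_left_singularVector_mul_le (hA : A = rankOne 𝕜 x y + E) (hu : ‖u‖ = 1)
    (heig : A (adjoint A u) = μ • u) :
    ‖perpProj 𝕜 x u‖ * ‖adjoint A u‖ ≤ ‖E‖ := by
  rcases eq_or_ne (adjoint A u) 0 with h0 | h0
  · simp [h0]
  have hproj : μ • perpProj 𝕜 x u = perpProj 𝕜 x (E (adjoint A u)) := by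
    rw [← map_smul, ← heig]
    nth_rewrite 1 [hA]
    simp [perpProj_apply_self]
  have hμ : ‖μ‖ = ‖adjoint A u‖ ^ 2 := by
    rw [← norm_adjoint_apply_sq_of_eigenvector hu heig, RCLike.norm_ofReal,
      abs_of_nonneg (by positivity)]
  refine le_of_mul_le_mul_right ?_ (norm_pos_iff.2 h0)
  calc ‖perpProj 𝕜 x u‖ * ‖adjoint A u‖ * ‖adjoint A u‖
      = ‖perpProj 𝕜 x (E (adjoint A u))‖ := by rw [← hproj, norm_smul, hμ]; ring
    _ ≤ ‖E (adjoint A u)‖ := norm_perpProj_apply_le _ _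
    _ ≤ ‖E‖ * ‖adjoint A u‖ := E.le_opNorm _

lemma norm_perpProj_adjoint_apply_le (hA : A = rankOne 𝕜 x y + E) (hu : ‖u‖ = 1) :
    ‖perpProj 𝕜 y (adjoint A u)‖ ≤ ‖E‖ := by
  have hproj : perpProj 𝕜 y (adjoint A u) = perpProj 𝕜 y (adjoint E u) := by
    simp [hA, perpProj_apply_self]
  calc ‖perpProj 𝕜 y (adjoint A u)‖ ≤ ‖adjoint E u‖ := hproj ▸ norm_perpProj_apply_le _ _
    _ ≤ ‖adjoint E‖ * ‖u‖ := (adjoint E).le_opNorm u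
    _ = ‖E‖ := by rw [LinearIsometryEquiv.norm_map, hu, mul_one]

lemma perpProj_comp_comp_perpProj_adjoint (heig : A (adjoint A u) = μ • u) :
    perpProj 𝕜 u ∘L A ∘L perpProj 𝕜 (adjoint A u) = perpProj 𝕜 u ∘L A := by
  have h : perpProj 𝕜 u ∘L A ∘L (1 - perpProj 𝕜 (adjoint A u)) = 0 := by
    rw [one_sub_perpProj, comp_rankOne, comp_rankOne, heig,
      (perpProj 𝕜 u).map_smul, perpProj_apply_self]
    simp
  rw [comp_sub, comp_sub, sub_eq_zero] at h
  exact h.symm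

theorem norm_perpProj_comp_sub_le (hA : A = rankOne 𝕜 x y + E) (hx : x ≠ 0) (hy : y ≠ 0)
    (hu : ‖u‖ = 1) (heig : A (adjoint A u) = μ • u) (hmax : ‖A‖ ≤ ‖adjoint A u‖)
    (hE : 2 * ‖E‖ ≤ ‖x‖ * ‖y‖) :
    ‖perpProj 𝕜 u ∘L A - perpProj 𝕜 x ∘L E ∘L perpProj 𝕜 y‖ ≤ 12 * ‖E‖ ^ 2 / (‖x‖ * ‖y‖) := by
  set v := adjoint A u
  set σ := ‖x‖ * ‖y‖ with hσ
  have hσ0 : 0 < σ := mul_pos (norm_pos_iff.2 hx) (norm_pos_iff.2 hy)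
  have hσA : σ ≤ ‖A‖ + ‖E‖ := by
    rw [hσ, ← norm_rankOne (𝕜 := 𝕜), ← sub_eq_of_eq_add hA]
    exact norm_sub_le A E
  have hσv : σ ≤ 2 * ‖v‖ := by linarith
  have hv : v ≠ 0 := norm_pos_iff.1 (by linarith)
  have hEv : ‖E‖ ≤ 2 * ‖E‖ / σ * ‖v‖ := by
    rw [div_mul_eq_mul_div, le_div_iff₀ hσ0]
    nlinarith [norm_nonneg E, hσv]
  have hxu : ‖perpProj 𝕜 x u‖ ≤ 2 * ‖E‖ / σ * ‖u‖ := by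
    rw [hu, mul_one]
    exact le_of_mul_le_mul_right
      ((norm_perpProj_left_singularVector_mul_le hA hu heig).trans hEv) (norm_pos_iff.2 hv)
  have hyv : ‖perpProj 𝕜 y v‖ ≤ 2 * ‖E‖ / σ * ‖v‖ :=
    (norm_perpProj_adjoint_apply_le hA hu).trans hEv
  have hu0 : u ≠ 0 := norm_ne_zero_iff.1 (hu ▸ one_ne_zero)
  have bound := norm_perpProj_comp_comp_perpProj_sub_le E hx hy hu0 hv hxu hyv
  rw [← hA, perpProj_comp_comp_perpProj_adjoint heig, ← hσ] at bound
  refine bound.trans_eq ?_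
  field_simp
  ring

end RankOnePerturbation

section MatrixOperator

open InnerProductSpace ContinuousLinearMap WithLp

variable {L K M : ℕ}

/-- The operator between Euclidean spaces given by a rectangular real matrix. -/
noncomputable def matrixCLM :
    Matrix (Fin L) (Fin K) ℝ ≃ₗ[ℝ] EuclideanSpace ℝ (Fin K) →L[ℝ] EuclideanSpace ℝ (Fin L) :=
  toEuclideanLin.trans LinearMap.toContinuousLinearMap

/-- The matrix `1 - w wᵀ / ‖w‖²` of the orthogonal projection onto `w^⊥` (the identity if
`w = 0`). -/
noncomputable def perpProjMatrix (w : Fin M → ℝ) : Matrix (Fin M) (Fin M) ℝ :=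
  1 - (normSq w)⁻¹ • vecMulVec w w

lemma matrixCLM_apply (A : Matrix (Fin L) (Fin K) ℝ) (x : EuclideanSpace ℝ (Fin K)) :
    matrixCLM A x = toLp 2 (A *ᵥ ofLp x) := rfl

lemma matrixCLM_one : matrixCLM (1 : Matrix (Fin M) (Fin M) ℝ) = 1 := by
  ext x
  simp [matrixCLM_apply]

lemma matrixCLM_mul (A : Matrix (Fin L) (Fin K) ℝ) (B : Matrix (Fin K) (Fin M) ℝ) :
    matrixCLM (A * B) = matrixCLM A ∘L matrixCLM B := by
  ext x
  simp [matrixCLM_apply]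

lemma matrixCLM_vecMulVec (x : Fin L → ℝ) (y : Fin K → ℝ) :
    matrixCLM (vecMulVec x y) = rankOne ℝ (toLp 2 x) (toLp 2 y) := by
  ext z i
  simp [matrixCLM_apply, vecMulVec_mulVec, EuclideanSpace.inner_eq_star_dotProduct,
    dotProduct_comm, mul_comm]

lemma adjoint_matrixCLM (A : Matrix (Fin L) (Fin K) ℝ) :
    adjoint (matrixCLM A) = matrixCLM Aᵀ := by
  refine ((eq_adjoint_iff _ _).2 fun x y => ?_).symm
  simp only [matrixCLM_apply, EuclideanSpace.inner_eq_star_dotProduct, star_trivial]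
  rw [dotProduct_mulVec, vecMul_transpose, dotProduct_comm]

lemma norm_toLp_sq (w : Fin M → ℝ) : ‖toLp 2 w‖ ^ 2 = normSq w :=
  EuclideanSpace.real_norm_sq_eq _

lemma matrixCLM_perpProjMatrix (w : Fin M → ℝ) :
    matrixCLM (perpProjMatrix w) = perpProj ℝ (toLp 2 w) := by
  rw [← sub_sub_cancel 1 (perpProj ℝ (toLp 2 w)), one_sub_perpProj, perpProjMatrix, map_sub,
    map_smul, matrixCLM_one, matrixCLM_vecMulVec, norm_toLp_sq, map_smul]
  rfl

lemma abs_apply_le_norm_matrixCLM (A : Matrix (Fin L) (Fin K) ℝ) (i : Fin L) (k : Fin K) :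
    |A i k| ≤ ‖matrixCLM A‖ := by
  calc |A i k| = ‖matrixCLM A (EuclideanSpace.single k 1) i‖ := by
        simp [matrixCLM_apply, Matrix.col]
    _ ≤ ‖matrixCLM A (EuclideanSpace.single k 1)‖ := PiLp.norm_apply_le _ i
    _ ≤ ‖matrixCLM A‖ := (matrixCLM A).unit_le_opNorm _ (by simp)

lemma norm_matrixCLM_le {A : Matrix (Fin L) (Fin K) ℝ} {b : ℝ} (hb : 0 ≤ b)
    (hA : ∀ i k, |A i k| ≤ b) : ‖matrixCLM A‖ ≤ b * √(L * K) := by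
  refine opNorm_le_bound _ (by positivity) fun x => ?_
  have row_sq_le (i : Fin L) : (A *ᵥ ofLp x) i ^ 2 ≤ K * b ^ 2 * ‖x‖ ^ 2 := by
    calc (A *ᵥ ofLp x) i ^ 2 ≤ (∑ k, A i k ^ 2) * ∑ k, x k ^ 2 :=
          Finset.sum_mul_sq_le_sq_mul_sq Finset.univ (A i) (ofLp x)
      _ ≤ (∑ _k : Fin K, b ^ 2) * ‖x‖ ^ 2 := by
          rw [EuclideanSpace.real_norm_sq_eq]
          exact mul_le_mul_of_nonneg_right
            (Finset.sum_le_sum fun k _ => sq_le_sq.2 ((hA i k).trans (le_abs_self b)))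
            (Finset.sum_nonneg fun k _ => sq_nonneg _)
      _ = K * b ^ 2 * ‖x‖ ^ 2 := by simp
  refine le_of_sq_le_sq ?_ (by positivity)
  calc ‖matrixCLM A x‖ ^ 2 = ∑ i, (A *ᵥ ofLp x) i ^ 2 := EuclideanSpace.real_norm_sq_eq _
    _ ≤ ∑ _i : Fin L, K * b ^ 2 * ‖x‖ ^ 2 := Finset.sum_le_sum fun i _ => row_sq_le i
    _ = (b * √(L * K) * ‖x‖) ^ 2 := by
        rw [mul_pow, mul_pow, Real.sq_sqrt (by positivity), Finset.sum_const, Finset.card_univ,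
          Fintype.card_fin, nsmul_eq_mul]
        ring

lemma dotProduct_mulVec_le_of_forall_eigenvalue_le {S : Matrix (Fin M) (Fin M) ℝ}
    (hS : S.IsHermitian) {μ : ℝ}
    (hμ : ∀ (ν : ℝ) (v : Fin M → ℝ), v ≠ 0 → S *ᵥ v = ν • v → ν ≤ μ) (x : Fin M → ℝ) :
    x ⬝ᵥ S *ᵥ x ≤ μ * (x ⬝ᵥ x) := by
  have hermitian : (μ • (1 : Matrix (Fin M) (Fin M) ℝ) - S).IsHermitian :=
    (isHermitian_one.smul (IsSelfAdjoint.all μ)).sub hS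
  have posSemidef : (μ • (1 : Matrix (Fin M) (Fin M) ℝ) - S).PosSemidef := by
    refine hermitian.posSemidef_iff_eigenvalues_nonneg.2 fun j => ?_
    have heig := hermitian.mulVec_eigenvectorBasis j
    rw [sub_mulVec, smul_mulVec, one_mulVec] at heig
    have hne : ofLp (hermitian.eigenvectorBasis j) ≠ 0 :=
      (ofLp_eq_zero 2).not.2 (hermitian.eigenvectorBasis.orthonormal.ne_zero j)
    have hle := hμ (μ - hermitian.eigenvalues j) _ hne (by rw [sub_smul, ← heig, sub_sub_cancel])
    simpa using hle
  have hquad := posSemidef.dotProduct_mulVec_nonneg x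
  rw [sub_mulVec, smul_mulVec, one_mulVec, dotProduct_sub, dotProduct_smul, star_trivial,
    smul_eq_mul] at hquad
  linarith

lemma norm_matrixCLM_transpose_apply_sq (A : Matrix (Fin L) (Fin K) ℝ) (x : Fin L → ℝ) :
    ‖matrixCLM Aᵀ (toLp 2 x)‖ ^ 2 = x ⬝ᵥ (A * Aᵀ) *ᵥ x := by
  rw [matrixCLM_apply, norm_toLp_sq, ← mulVec_mulVec, dotProduct_mulVec, ← mulVec_transpose]
  simp only [normSq, dotProduct, sq]

lemma normSq_eq_dotProduct (w : Fin M → ℝ) : normSq w = w ⬝ᵥ w := by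
  simp only [normSq, dotProduct, sq]

lemma norm_matrixCLM_le_of_isTopEigenvector {A : Matrix (Fin L) (Fin K) ℝ} {u : Fin L → ℝ}
    (hu : IsTopEigenvector (A * Aᵀ) u) :
    ‖matrixCLM A‖ ≤ ‖adjoint (matrixCLM A) (toLp 2 u)‖ := by
  obtain ⟨hunit, μ, heig, hmax⟩ := hu
  rw [normSq_eq_dotProduct] at hunit
  have hμ : ‖adjoint (matrixCLM A) (toLp 2 u)‖ ^ 2 = μ := by
    rw [adjoint_matrixCLM, norm_matrixCLM_transpose_apply_sq, heig, dotProduct_smul, hunit,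
      smul_eq_mul, mul_one]
  rw [← LinearIsometryEquiv.norm_map adjoint (matrixCLM A)]
  refine opNorm_le_bound _ (norm_nonneg _) fun x => le_of_sq_le_sq ?_ (by positivity)
  rw [mul_pow, hμ, adjoint_matrixCLM, EuclideanSpace.real_norm_sq_eq x]
  calc _ = ofLp x ⬝ᵥ (A * Aᵀ) *ᵥ ofLp x := norm_matrixCLM_transpose_apply_sq A (ofLp x)
    _ ≤ μ * (ofLp x ⬝ᵥ ofLp x) :=
      dotProduct_mulVec_le_of_forall_eigenvalue_le (isHermitian_mul_conjTranspose_self A) hmax _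
    _ = _ := by rw [← normSq_eq_dotProduct, normSq]

theorem abs_perpProjMatrix_mul_sub_apply_le {A E : Matrix (Fin L) (Fin K) ℝ} {x u : Fin L → ℝ}
    {y : Fin K → ℝ} (hA : A = vecMulVec x y + E) (hx : x ≠ 0) (hy : y ≠ 0)
    (hu : IsTopEigenvector (A * Aᵀ) u)
    (hE : 2 * ‖matrixCLM E‖ ≤ ‖toLp 2 x‖ * ‖toLp 2 y‖) (i : Fin L) (k : Fin K) :
    |(perpProjMatrix u * A - perpProjMatrix x * E * perpProjMatrix y) i k|
      ≤ 12 * ‖matrixCLM E‖ ^ 2 / (‖toLp 2 x‖ * ‖toLp 2 y‖) := by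
  have hmax := norm_matrixCLM_le_of_isTopEigenvector hu
  obtain ⟨hunit, μ, heig, -⟩ := hu
  have hunit' : ‖toLp 2 u‖ = 1 := by
    rw [← pow_left_inj₀ (norm_nonneg _) zero_le_one two_ne_zero, norm_toLp_sq, hunit, one_pow]
  have heig' : matrixCLM A (adjoint (matrixCLM A) (toLp 2 u)) = μ • toLp 2 u := by
    rw [adjoint_matrixCLM, matrixCLM_apply, matrixCLM_apply, mulVec_mulVec, heig, toLp_smul]
  have hA' : matrixCLM A = rankOne ℝ (toLp 2 x) (toLp 2 y) + matrixCLM E := by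
    rw [hA, map_add, matrixCLM_vecMulVec]
  have norm_le := norm_perpProj_comp_sub_le hA'
    ((toLp_eq_zero 2).not.2 hx) ((toLp_eq_zero 2).not.2 hy) hunit' heig' hmax hE
  rw [← matrixCLM_perpProjMatrix, ← matrixCLM_perpProjMatrix, ← matrixCLM_perpProjMatrix,
    ← matrixCLM_mul, ← matrixCLM_mul, ← matrixCLM_mul, ← map_sub, ← Matrix.mul_assoc] at norm_le
  exact (abs_apply_le_norm_matrixCLM _ i k).trans norm_le

end MatrixOperator

section Hankelize

open Finset.HasAntidiagonal

variable {L K : ℕ}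

lemma hankelize_add (Y Z : Matrix (Fin L) (Fin K) ℝ) (j : ℕ) :
    hankelize (Y + Z) j = hankelize Y j + hankelize Z j := by
  simp only [hankelize, ← add_div, ← Finset.sum_add_distrib, Matrix.add_apply, ite_add_zero]

lemma hankelize_smul (c : ℝ) (Y : Matrix (Fin L) (Fin K) ℝ) (j : ℕ) :
    hankelize (c • Y) j = c * hankelize Y j := by
  simp only [hankelize, Matrix.smul_apply, smul_eq_mul, ← mul_div_assoc, Finset.mul_sum, mul_ite,
    mul_zero]

lemma abs_hankelize_le {Y : Matrix (Fin L) (Fin K) ℝ} {ε : ℝ} (hε : 0 ≤ ε)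
    (hY : ∀ i k, |Y i k| ≤ ε) (j : ℕ) : |hankelize Y j| ≤ ε := by
  have count_nonneg :
      0 ≤ ∑ i : Fin L, ∑ k : Fin K, if (i : ℕ) + (k : ℕ) = j then (1 : ℝ) else 0 :=
    Finset.sum_nonneg fun i _ => Finset.sum_nonneg fun k _ => by positivity
  rw [hankelize, abs_div, abs_of_nonneg count_nonneg]
  refine div_le_of_le_mul₀ count_nonneg hε ?_
  simp only [Finset.mul_sum]
  refine (Finset.abs_sum_le_sum_abs _ _).trans (Finset.sum_le_sum fun i _ => ?_)
  refine (Finset.abs_sum_le_sum_abs _ _).trans (Finset.sum_le_sum fun k _ => ?_)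
  split_ifs
  · simpa using hY i k
  · simp

lemma hankelize_hankelOf (x : ℕ → ℝ) {j : ℕ} (i : Fin L) (k : Fin K) (hj : (i : ℕ) + k = j) :
    hankelize (hankelOf x L K) j = x j := by
  have count_pos :
      0 < ∑ i : Fin L, ∑ k : Fin K, if (i : ℕ) + (k : ℕ) = j then (1 : ℝ) else 0 :=
    Finset.sum_pos' (fun i _ => Finset.sum_nonneg fun k _ => by positivity)
      ⟨i, Finset.mem_univ i, Finset.sum_pos' (fun k _ => by positivity)
        ⟨k, Finset.mem_univ k, by simp [hj]⟩⟩
  rw [hankelize, div_eq_iff count_pos.ne']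
  simp only [Finset.mul_sum]
  refine Finset.sum_congr rfl fun i _ => Finset.sum_congr rfl fun k _ => ?_
  split_ifs with h
  · simp [hankelOf, h]
  · simp

lemma sum_ite_add_eq_sum_antidiagonal {R : Type*} [AddCommMonoid R] {ℓ : ℕ} (hL : ℓ < L)
    (hK : ℓ < K) (F : ℕ → ℕ → R) :
    ∑ i : Fin L, ∑ k : Fin K, (if (i : ℕ) + (k : ℕ) = ℓ then F i k else 0)
      = ∑ p ∈ antidiagonal ℓ, F p.1 p.2 := by
  have inner (i : ℕ) : ∑ k : Fin K, (if i + (k : ℕ) = ℓ then F i k else 0)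
      = ∑ k ∈ Finset.range K, if i + k = ℓ then F i k else 0 :=
    Fin.sum_univ_eq_sum_range (fun k => if i + k = ℓ then F i k else 0) K
  simp only [inner]
  rw [Fin.sum_univ_eq_sum_range (fun i => ∑ k ∈ Finset.range K, if i + k = ℓ then F i k else 0) L,
    ← Finset.sum_product', ← Finset.sum_filter]
  refine Finset.sum_congr ?_ fun p _ => rfl
  ext p
  simp only [Finset.mem_filter, Finset.mem_product, Finset.mem_range, mem_antidiagonal]
  omega

lemma sum_ite_add_eq_sum_antidiagonal_rev {ℓ j : ℕ} (hL : ℓ < L) (hK : ℓ < K)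
    (hj : j + ℓ + 2 = L + K) {Y : Matrix (Fin L) (Fin K) ℝ} {F : ℕ → ℕ → ℝ}
    (hF : ∀ s t, Y (Fin.rev s) (Fin.rev t) = F s t) :
    ∑ i : Fin L, ∑ k : Fin K, (if (i : ℕ) + (k : ℕ) = j then Y i k else 0)
      = ∑ p ∈ antidiagonal ℓ, F p.1 p.2 := by
  rw [← sum_ite_add_eq_sum_antidiagonal hL hK, ← Equiv.sum_comp Fin.revPerm]
  refine Finset.sum_congr rfl fun s _ => ?_
  rw [← Equiv.sum_comp Fin.revPerm]
  refine Finset.sum_congr rfl fun t _ => if_congr ?_ (hF s t) rfl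
  simp only [Fin.revPerm_apply, Fin.val_rev]
  omega

lemma hankelize_eq_sum_antidiagonal_div {ℓ j : ℕ} (hL : ℓ < L) (hK : ℓ < K)
    (hj : j + ℓ + 2 = L + K) {Y : Matrix (Fin L) (Fin K) ℝ} {F : ℕ → ℕ → ℝ}
    (hF : ∀ s t, Y (Fin.rev s) (Fin.rev t) = F s t) :
    hankelize Y j = (∑ p ∈ antidiagonal ℓ, F p.1 p.2) / (ℓ + 1) := by
  rw [hankelize, sum_ite_add_eq_sum_antidiagonal_rev hL hK hj hF,
    sum_ite_add_eq_sum_antidiagonal_rev hL hK hj (Y := fun _ _ => 1)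
      (F := fun _ _ => 1) fun _ _ => rfl]
  simp

end Hankelize

section FirstOrderError

open WithLp

variable {a δ ξ φ : ℝ} {L K M n j : ℕ} {u : Fin L → ℝ}

lemma hankelOf_expSignal (a : ℝ) (L K : ℕ) :
    hankelOf (expSignal a) L K = vecMulVec (Wvec a L) (Wvec a K) := by
  ext i k
  simp [hankelOf, expSignal, Wvec, vecMulVec_apply, pow_add]

lemma abs_pow_le_norm_Wvec (a : ℝ) (M : ℕ) : |a| ^ M ≤ ‖toLp 2 (Wvec a (M + 1))‖ := by
  simpa [Wvec] using PiLp.norm_apply_le (toLp 2 (Wvec a (M + 1))) (Fin.last M)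

lemma Wvec_ne_zero (a : ℝ) (hM : 0 < M) : Wvec a M ≠ 0 := fun h => by
  simpa [Wvec] using congrFun h ⟨0, hM⟩

lemma abs_pow_le_norm_Wvec_mul_norm_Wvec (hL : 0 < L) (hK : 0 < K) (hLK : L + K = n + 2) :
    |a| ^ n ≤ ‖toLp 2 (Wvec a L)‖ * ‖toLp 2 (Wvec a K)‖ := by
  obtain ⟨l, rfl⟩ := Nat.exists_eq_succ_of_ne_zero hL.ne'
  obtain ⟨k, rfl⟩ := Nat.exists_eq_succ_of_ne_zero hK.ne'
  obtain rfl : n = l + k := by omega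
  rw [pow_add]
  gcongr <;> exact abs_pow_le_norm_Wvec a _

lemma norm_matrixCLM_smul_cosNoise_le (hL : 0 < L) (hK : 0 < K) (hLK : L + K = n + 2) :
    ‖matrixCLM (δ • hankelOf (cosNoise ξ φ) L K)‖ ≤ |δ| * (n + 1) := by
  have entry_le (i : Fin L) (k : Fin K) : |(δ • hankelOf (cosNoise ξ φ) L K) i k| ≤ |δ| := by
    simp only [Matrix.smul_apply, smul_eq_mul, abs_mul]
    exact mul_le_of_le_one_right (abs_nonneg δ) (Real.abs_cos_le_one _)
  refine (norm_matrixCLM_le (abs_nonneg δ) entry_le).trans ?_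
  gcongr
  refine Real.sqrt_le_iff.2 ⟨by positivity, ?_⟩
  have hLn : (L : ℝ) ≤ n + 1 := by norm_cast; omega
  have hKn : (K : ℝ) ≤ n + 1 := by norm_cast; omega
  nlinarith

/-- The coefficient of `δ` in the expansion of the matrix `u uᵀ H(δ) - H`, whose hankelization is
the reconstruction error, when the exponential signal `a^n` carries the noise `δ e`. -/
noncomputable def firstOrderError (a : ℝ) (e : ℕ → ℝ) (L K : ℕ) : Matrix (Fin L) (Fin K) ℝ :=
  hankelOf e L K - perpProjMatrix (Wvec a L) * hankelOf e L K * perpProjMatrix (Wvec a K)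

lemma vecMulVec_self_mul_eq_sub (hu : normSq u = 1) (A : Matrix (Fin L) (Fin K) ℝ) :
    vecMulVec u u * A = A - perpProjMatrix u * A := by
  rw [perpProjMatrix, hu, inv_one, one_smul, Matrix.sub_mul, Matrix.one_mul, sub_sub_cancel]

lemma recErr_eq_add_hankelize (hu : normSq u = 1) (hL : 0 < L) (hK : 0 < K)
    (hj : j + 2 ≤ L + K) :
    recErr a ξ φ δ L K u j = δ * hankelize (firstOrderError a (cosNoise ξ φ) L K) j
      + -1 * hankelize (perpProjMatrix u *
          (hankelOf (expSignal a) L K + δ • hankelOf (cosNoise ξ φ) L K)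
        - perpProjMatrix (Wvec a L) * (δ • hankelOf (cosNoise ξ φ) L K)
          * perpProjMatrix (Wvec a K)) j := by
  have hsignal : hankelize (hankelOf (expSignal a) L K) j = a ^ j :=
    hankelize_hankelOf _ (⟨min j (L - 1), by omega⟩ : Fin L)
      (⟨j - min j (L - 1), by omega⟩ : Fin K) (by simp)
  rw [recErr, ← hsignal, sub_eq_iff_eq_add, ← hankelize_smul, ← hankelize_smul, ← hankelize_add,
    ← hankelize_add, vecMulVec_self_mul_eq_sub hu, firstOrderError]
  congr 1
  simp only [smul_sub, Matrix.mul_smul, Matrix.smul_mul, neg_smul, one_smul]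
  abel

theorem abs_recErr_sub_firstOrderError_le (ha : a ≠ 0) (hL : 0 < L) (hK : 0 < K)
    (hLK : L + K = n + 2) (hj : j ≤ n) (hu : IsTopEigenvector (HdeltaSq a ξ φ δ L K) u)
    (hδ : 2 * (|δ| * (n + 1)) ≤ |a| ^ n) :
    |recErr a ξ φ δ L K u j - δ * hankelize (firstOrderError a (cosNoise ξ φ) L K) j|
      ≤ 12 * (|δ| * (n + 1)) ^ 2 / |a| ^ n := by
  have hE := norm_matrixCLM_smul_cosNoise_le (δ := δ) (ξ := ξ) (φ := φ) hL hK hLK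
  have hσ := abs_pow_le_norm_Wvec_mul_norm_Wvec (a := a) hL hK hLK
  rw [recErr_eq_add_hankelize hu.1 hL hK (by omega), add_sub_cancel_left, neg_one_mul, abs_neg]
  refine abs_hankelize_le (by positivity) (fun i k => ?_) j
  refine (abs_perpProjMatrix_mul_sub_apply_le (by rw [hankelOf_expSignal]) (Wvec_ne_zero a hL)
    (Wvec_ne_zero a hK) hu (by linarith) i k).trans ?_
  have : 0 < |a| ^ n := by positivity
  gcongr

end FirstOrderError

section ErrorAmplitude

open Finset.HasAntidiagonal

variable {a : ℝ} {L K M n j ℓ : ℕ}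

lemma perpProjMatrix_apply (w : Fin M → ℝ) (s t : Fin M) :
    perpProjMatrix w s t = (if s = t then 1 else 0) - (normSq w)⁻¹ * (w s * w t) := by
  simp [perpProjMatrix, Matrix.one_apply, vecMulVec_apply]

lemma normSq_smul (c : ℝ) (w : Fin M → ℝ) : normSq (c • w) = c ^ 2 * normSq w := by
  simp [normSq, mul_pow, Finset.mul_sum]

lemma perpProjMatrix_smul {c : ℝ} (hc : c ≠ 0) (w : Fin M → ℝ) :
    perpProjMatrix (c • w) = perpProjMatrix w := by
  ext s t
  simp only [perpProjMatrix_apply, normSq_smul, Pi.smul_apply, smul_eq_mul, mul_inv]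
  field_simp

lemma perpProjMatrix_submatrix (w : Fin M → ℝ) (e : Equiv.Perm (Fin M)) :
    (perpProjMatrix w).submatrix e e = perpProjMatrix (w ∘ e) := by
  ext s t
  have hnorm : normSq (w ∘ e) = normSq w := Equiv.sum_comp e fun i => w i ^ 2
  simp [perpProjMatrix_apply, hnorm]

lemma Wvec_comp_rev (ha : a ≠ 0) (M : ℕ) :
    Wvec a M ∘ Fin.revPerm = a ^ (M - 1) • Wvec a⁻¹ M := by
  ext s
  have hs : M - 1 = (M - (s + 1)) + s := by omega
  simp only [Function.comp_apply, Wvec, Fin.revPerm_apply, Fin.val_rev, Pi.smul_apply, smul_eq_mul]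
  rw [hs, pow_add, inv_pow, mul_inv_cancel_right₀ (pow_ne_zero _ ha)]

lemma perpProjMatrix_Wvec_submatrix_rev (ha : a ≠ 0) (M : ℕ) :
    (perpProjMatrix (Wvec a M)).submatrix Fin.revPerm Fin.revPerm
      = perpProjMatrix (Wvec a⁻¹ M) := by
  rw [perpProjMatrix_submatrix, Wvec_comp_rev ha, perpProjMatrix_smul (pow_ne_zero _ ha)]

/-- The coefficient of the orthogonal projection of `(1, z, …, z^(M-1))` onto the line spanned
by `(1, b, …, b^(M-1))`, for real `b`. -/
noncomputable def geomProjCoeff (b z : ℂ) (M : ℕ) : ℂ :=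
  (∑ t ∈ Finset.range M, (b * z) ^ t) / ∑ t ∈ Finset.range M, (b ^ 2) ^ t

lemma sum_perpProjMatrix_Wvec_mul_pow (b : ℝ) (z : ℂ) (s : Fin M) :
    ∑ t, (perpProjMatrix (Wvec b M) s t : ℂ) * z ^ (t : ℕ)
      = z ^ (s : ℕ) - geomProjCoeff b z M * b ^ (s : ℕ) := by
  have hnorm : ((normSq (Wvec b M) : ℝ) : ℂ) = ∑ t ∈ Finset.range M, ((b : ℂ) ^ 2) ^ t := by
    rw [← Fin.sum_univ_eq_sum_range (fun t => ((b : ℂ) ^ 2) ^ t) M]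
    simp [normSq, Wvec, pow_right_comm]
  have hinner : ∑ t ∈ Finset.range M, ((b : ℂ) * z) ^ t
      = ∑ t : Fin M, (Wvec b M t : ℂ) * z ^ (t : ℕ) := by
    rw [← Fin.sum_univ_eq_sum_range (fun t => ((b : ℂ) * z) ^ t) M]
    simp [Wvec, mul_pow]
  simp only [perpProjMatrix_apply, Complex.ofReal_sub, sub_mul, Finset.sum_sub_distrib]
  rw [geomProjCoeff, ← hnorm, hinner, div_eq_inv_mul, Finset.mul_sum, Finset.sum_mul]
  congr 1
  · simp [apply_ite Complex.ofReal, ite_mul]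
  · refine Finset.sum_congr rfl fun t _ => ?_
    rw [show Wvec b M s = b ^ (s : ℕ) from rfl]
    push_cast
    ring

lemma cosNoise_eq_re (ξ φ : ℝ) {m r : ℕ} (h : m + r = n) :
    cosNoise ξ φ m
      = (Complex.exp ((ξ * n + φ) * Complex.I) * Complex.exp (-ξ * Complex.I) ^ r).re := by
  rw [← Complex.exp_nat_mul, ← Complex.exp_add, cosNoise, ← Complex.exp_ofReal_mul_I_re, ← h]
  congr 2
  push_cast
  ring

lemma sum_mul_re_mul_sum_eq_re (p z : ℂ) (A : Fin L → ℝ) (B : Fin K → ℝ) :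
    ∑ k : Fin K, (∑ i : Fin L, A i * (p * z ^ ((i : ℕ) + (k : ℕ))).re) * B k
      = (p * ((∑ i, (A i : ℂ) * z ^ (i : ℕ)) * ∑ k, (B k : ℂ) * z ^ (k : ℕ))).re := by
  simp only [Finset.mul_sum, Finset.sum_mul, Complex.re_sum]
  refine Finset.sum_congr rfl fun i _ => Finset.sum_congr rfl fun k _ => ?_
  rw [← Complex.re_ofReal_mul, ← Complex.re_mul_ofReal, pow_add]
  ring_nf

lemma perpProjMatrix_mul_hankelOf_mul_rev (ha : a ≠ 0) {e : ℕ → ℝ} {p z : ℂ}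
    (he : ∀ m r, m + r + 2 = L + K → e m = (p * z ^ r).re) (s : Fin L) (t : Fin K) :
    (perpProjMatrix (Wvec a L) * hankelOf e L K * perpProjMatrix (Wvec a K)) s.rev t.rev
      = (p * ((z ^ (s : ℕ) - geomProjCoeff a⁻¹ z L * (a⁻¹ : ℂ) ^ (s : ℕ)) *
          (z ^ (t : ℕ) - geomProjCoeff a⁻¹ z K * (a⁻¹ : ℂ) ^ (t : ℕ)))).re := by
  have hsym (k : Fin K) :
      perpProjMatrix (Wvec a⁻¹ K) k t = perpProjMatrix (Wvec a⁻¹ K) t k := by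
    simp only [perpProjMatrix_apply, eq_comm, mul_comm]
  let reversed : Matrix (Fin L) (Fin K) ℝ := of fun i k => (p * z ^ ((i : ℕ) + (k : ℕ))).re
  have hreversed : (hankelOf e L K).submatrix Fin.revPerm Fin.revPerm = reversed := by
    ext i k
    refine he _ _ ?_
    simp only [Fin.revPerm_apply, Fin.val_rev]
    omega
  calc _ = ((perpProjMatrix (Wvec a L) * hankelOf e L K * perpProjMatrix (Wvec a K)).submatrix
          Fin.revPerm Fin.revPerm) s t := rfl
    _ = (perpProjMatrix (Wvec a⁻¹ L) * reversed * perpProjMatrix (Wvec a⁻¹ K)) s t := by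
      rw [← submatrix_mul_equiv _ _ _ Fin.revPerm, ← submatrix_mul_equiv _ _ _ Fin.revPerm,
        perpProjMatrix_Wvec_submatrix_rev ha, perpProjMatrix_Wvec_submatrix_rev ha, hreversed]
    _ = _ := by
      simp only [mul_apply, reversed, of_apply, hsym]
      rw [sum_mul_re_mul_sum_eq_re, sum_perpProjMatrix_Wvec_mul_pow,
        sum_perpProjMatrix_Wvec_mul_pow, Complex.ofReal_inv]

/-- The complex amplitude of the first-order error `ℓ` places before the end of a series whose
noise is `Re (p z^r)` at distance `r` from the end; `b` is the inverse of the base of the signal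
and `κ, κ'` are the projection coefficients for the two window lengths. -/
noncomputable def errorAmplitude (b z κ κ' : ℂ) (ℓ : ℕ) : ℂ :=
  (∑ q ∈ antidiagonal ℓ, (z ^ ℓ - (z ^ q.1 - κ * b ^ q.1) * (z ^ q.2 - κ' * b ^ q.2))) / (ℓ + 1)

theorem hankelize_firstOrderError_eq_re (ha : a ≠ 0) {e : ℕ → ℝ} {p z : ℂ}
    (he : ∀ m r, m + r + 2 = L + K → e m = (p * z ^ r).re) (hL : ℓ < L) (hK : ℓ < K)
    (hj : j + ℓ + 2 = L + K) :
    hankelize (firstOrderError a e L K) j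
      = (p * errorAmplitude a⁻¹ z (geomProjCoeff a⁻¹ z L) (geomProjCoeff a⁻¹ z K) ℓ).re := by
  have hrev (s : Fin L) (t : Fin K) : firstOrderError a e L K s.rev t.rev
      = (p * (z ^ ((s : ℕ) + (t : ℕ)) -
          (z ^ (s : ℕ) - geomProjCoeff a⁻¹ z L * (a⁻¹ : ℂ) ^ (s : ℕ)) *
          (z ^ (t : ℕ) - geomProjCoeff a⁻¹ z K * (a⁻¹ : ℂ) ^ (t : ℕ)))).re := by
    rw [mul_sub, Complex.sub_re, ← perpProjMatrix_mul_hankelOf_mul_rev ha he, firstOrderError,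
      Matrix.sub_apply, hankelOf, of_apply, he _ ((s : ℕ) + (t : ℕ))]
    simp only [Fin.val_rev]
    omega
  rw [hankelize_eq_sum_antidiagonal_div hL hK hj (F := fun s t => (p * (z ^ (s + t) -
    (z ^ s - geomProjCoeff a⁻¹ z L * (a⁻¹ : ℂ) ^ s) *
    (z ^ t - geomProjCoeff a⁻¹ z K * (a⁻¹ : ℂ) ^ t))).re) hrev, errorAmplitude, ← Complex.re_sum,
    ← Finset.mul_sum, mul_div_assoc']
  rw [show ((ℓ : ℂ) + 1) = ((ℓ + 1 : ℝ) : ℂ) by push_cast; rfl, Complex.div_ofReal_re]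
  refine congrArg (fun w : ℂ => (p * w).re / (ℓ + 1 : ℝ)) (Finset.sum_congr rfl fun q hq => ?_)
  rw [mem_antidiagonal.1 hq]

end ErrorAmplitude

section LimitAmplitude

open Finset.HasAntidiagonal

variable {a : ℝ} {b z w : ℂ}

lemma tendsto_geomProjCoeff (hb : ‖b‖ < 1) (hbz : ‖b * z‖ < 1) :
    Tendsto (geomProjCoeff b z) atTop (𝓝 ((1 - b ^ 2) / (1 - b * z))) := by
  have hb_sq : ‖b ^ 2‖ < 1 := by
    rw [norm_pow]
    exact pow_lt_one₀ (norm_nonneg b) hb two_ne_zero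
  have hne : 1 - b ^ 2 ≠ 0 := sub_ne_zero.2 fun h => by simp [← h] at hb_sq
  have hquot := (hasSum_geometric_of_norm_lt_one hbz).tendsto_sum_nat.div
    (hasSum_geometric_of_norm_lt_one hb_sq).tendsto_sum_nat (inv_ne_zero hne)
  rwa [inv_div_inv] at hquot

lemma tendsto_errorAmplitude {ι : Type*} {l : Filter ι} {κ κ' : ι → ℂ} {k k' : ℂ} (b z : ℂ) (ℓ : ℕ)
    (hκ : Tendsto κ l (𝓝 k)) (hκ' : Tendsto κ' l (𝓝 k')) :
    Tendsto (fun i => errorAmplitude b z (κ i) (κ' i) ℓ) l (𝓝 (errorAmplitude b z k k' ℓ)) :=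
  (tendsto_finsetSum _ fun _ _ => tendsto_const_nhds.sub
    ((tendsto_const_nhds.sub (hκ.mul_const _)).mul
      (tendsto_const_nhds.sub (hκ'.mul_const _)))).div_const _

lemma errorAmplitude_self (b z κ : ℂ) (ℓ : ℕ) :
    errorAmplitude b z κ κ ℓ
      = 2 / (1 + ℓ) * (κ * ∑ q ∈ antidiagonal ℓ, z ^ q.1 * b ^ q.2) - κ ^ 2 * b ^ ℓ := by
  have hℓ : (1 + ℓ : ℂ) ≠ 0 := by norm_cast; omega
  have hswap : ∑ q ∈ antidiagonal ℓ, b ^ q.1 * z ^ q.2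
      = ∑ q ∈ antidiagonal ℓ, z ^ q.1 * b ^ q.2 := by
    rw [← Finset.Nat.sum_antidiagonal_swap]
    simp only [Prod.fst_swap, Prod.snd_swap, mul_comm]
  have hterm (q) (hq : q ∈ antidiagonal ℓ) :
      z ^ ℓ - (z ^ q.1 - κ * b ^ q.1) * (z ^ q.2 - κ * b ^ q.2)
        = κ * (z ^ q.1 * b ^ q.2) + κ * (b ^ q.1 * z ^ q.2) - κ ^ 2 * b ^ ℓ := by
    rw [← mem_antidiagonal.1 hq, pow_add, pow_add]
    ring
  rw [errorAmplitude, Finset.sum_congr rfl hterm, Finset.sum_sub_distrib, Finset.sum_add_distrib,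
    ← Finset.mul_sum, ← Finset.mul_sum, hswap, Finset.sum_const, Finset.Nat.card_antidiagonal,
    nsmul_eq_mul]
  push_cast
  field_simp
  ring

lemma sum_antidiagonal_pow_mul_pow_mul_sub {a : ℂ} (hab : a * b = 1) (hzw : z * w = 1) (ℓ : ℕ) :
    (∑ q ∈ antidiagonal ℓ, z ^ q.1 * b ^ q.2) * (a - w) = a * z ^ ℓ - b ^ ℓ * w := by
  have hgeom : (∑ q ∈ antidiagonal ℓ, z ^ q.1 * b ^ q.2) * (z - b) = z ^ (ℓ + 1) - b ^ (ℓ + 1) := by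
    rw [Finset.Nat.sum_antidiagonal_eq_sum_range_succ fun s t => z ^ s * b ^ t]
    exact geom_sum₂_mul z b (ℓ + 1)
  linear_combination a * w * hgeom
    + (∑ q ∈ antidiagonal ℓ, z ^ q.1 * b ^ q.2) * (w * hab - a * hzw)
    + a * z ^ ℓ * hzw - w * b ^ ℓ * hab

lemma ne_zero_of_one_lt_abs (ha : 1 < |a|) : a ≠ 0 :=
  abs_pos.1 (one_pos.trans ha)

lemma sq_add_one_sub_two_mul_cos_pos (ha : 1 < |a|) (ξ : ℝ) :
    0 < a ^ 2 + 1 - 2 * a * Real.cos ξ := by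
  have hcos : a * Real.cos ξ ≤ |a| := by
    calc a * Real.cos ξ ≤ |a| * |Real.cos ξ| := abs_mul a _ ▸ le_abs_self _
      _ ≤ |a| := mul_le_of_le_one_right (abs_nonneg a) (Real.abs_cos_le_one ξ)
  nlinarith [sq_abs a]

lemma Gfun_ne_zero (ha : 1 < |a|) (ξ : ℝ) : Gfun a ξ ≠ 0 := by
  have ha_sq : 1 < a ^ 2 := one_lt_sq_iff_one_lt_abs a |>.2 ha
  exact div_ne_zero (by linarith)
    (mul_ne_zero (ne_zero_of_one_lt_abs ha) (sq_add_one_sub_two_mul_cos_pos ha ξ).ne')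

lemma exp_neg_mul_I_mul_exp_mul_I (ξ : ℝ) :
    Complex.exp (-ξ * Complex.I) * Complex.exp (ξ * Complex.I) = 1 := by
  rw [← Complex.exp_add, ← add_mul, neg_add_cancel, zero_mul, Complex.exp_zero]

lemma one_sub_div_one_sub_eq_Gfun_mul (ha : 1 < |a|) (ξ : ℝ) :
    (1 - (a⁻¹ : ℂ) ^ 2) / (1 - (a⁻¹ : ℂ) * Complex.exp (-ξ * Complex.I))
      = Gfun a ξ * (a - Complex.exp (ξ * Complex.I)) := by
  have hD := (sq_add_one_sub_two_mul_cos_pos ha ξ).ne'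
  have ha0 : (a : ℂ) ≠ 0 := Complex.ofReal_ne_zero.2 (ne_zero_of_one_lt_abs ha)
  have hfactor : ((a ^ 2 + 1 - 2 * a * Real.cos ξ : ℝ) : ℂ)
      = (a - Complex.exp (-ξ * Complex.I)) * (a - Complex.exp (ξ * Complex.I)) := by
    push_cast
    rw [Complex.cos]
    linear_combination -exp_neg_mul_I_mul_exp_mul_I ξ
  have hfactor_ne := Complex.ofReal_ne_zero.2 hD
  rw [hfactor] at hfactor_ne
  rw [Gfun, Complex.ofReal_div, Complex.ofReal_mul, hfactor]
  have hright := right_ne_zero_of_mul hfactor_ne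
  push_cast
  field_simp

lemma C1_sub_C2_mul_I (a ξ : ℝ) (ℓ : ℕ) :
    (C1 a ξ ℓ - C2 a ξ ℓ * Complex.I : ℂ)
      = 2 / (1 + ℓ) * (a * Complex.exp (-ξ * Complex.I) ^ ℓ
          - (a⁻¹ : ℂ) ^ ℓ * Complex.exp (ξ * Complex.I))
        - Gfun a ξ * (a - Complex.exp (ξ * Complex.I)) ^ 2 * (a⁻¹ : ℂ) ^ ℓ := by
  have hexp : Complex.exp (ξ * Complex.I) = Real.cos ξ + Real.sin ξ * Complex.I := by
    rw [Complex.exp_mul_I, Complex.ofReal_cos, Complex.ofReal_sin]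
  have hexp_pow : Complex.exp (-ξ * Complex.I) ^ ℓ
      = Real.cos (ℓ * ξ) - Real.sin (ℓ * ξ) * Complex.I := by
    rw [← Complex.exp_nat_mul, Complex.ofReal_cos, Complex.ofReal_sin, Complex.cos_sub_sin_I]
    push_cast
    ring_nf
  have hsq : (Real.cos ξ : ℂ) ^ 2 + (Real.sin ξ : ℂ) ^ 2 = 1 :=
    mod_cast Real.cos_sq_add_sin_sq ξ
  rw [hexp, hexp_pow, C1, C2, _root_.zpow_neg, zpow_natCast, ← inv_pow]
  push_cast at hsq ⊢
  linear_combination (Gfun a ξ : ℂ) * (a⁻¹ : ℂ) ^ ℓ * hsq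
    + (Gfun a ξ : ℂ) * (a⁻¹ : ℂ) ^ ℓ * Complex.sin ξ ^ 2 * Complex.I_sq

lemma errorAmplitude_eq_Gfun_mul (ha : 1 < |a|) (ξ : ℝ) (ℓ : ℕ) :
    errorAmplitude a⁻¹ (Complex.exp (-ξ * Complex.I))
        (Gfun a ξ * (a - Complex.exp (ξ * Complex.I)))
        (Gfun a ξ * (a - Complex.exp (ξ * Complex.I))) ℓ
      = Gfun a ξ * (C1 a ξ ℓ - C2 a ξ ℓ * Complex.I) := by
  have ha_inv : (a : ℂ) * (a⁻¹ : ℂ) = 1 :=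
    mul_inv_cancel₀ (Complex.ofReal_ne_zero.2 (ne_zero_of_one_lt_abs ha))
  rw [errorAmplitude_self, C1_sub_C2_mul_I,
    ← sum_antidiagonal_pow_mul_pow_mul_sub ha_inv (exp_neg_mul_I_mul_exp_mul_I ξ)]
  ring

lemma tendsto_errorAmplitude_geomProjCoeff (ha : 1 < |a|) (ξ : ℝ) (ℓ : ℕ) {L K : ℕ → ℕ}
    (hL : Tendsto L atTop atTop) (hK : Tendsto K atTop atTop) :
    Tendsto (fun N => errorAmplitude a⁻¹ (Complex.exp (-ξ * Complex.I))
        (geomProjCoeff a⁻¹ (Complex.exp (-ξ * Complex.I)) (L N))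
        (geomProjCoeff a⁻¹ (Complex.exp (-ξ * Complex.I)) (K N)) ℓ)
      atTop (𝓝 (Gfun a ξ * (C1 a ξ ℓ - C2 a ξ ℓ * Complex.I))) := by
  have hinv : ‖(a⁻¹ : ℂ)‖ < 1 := by
    rw [norm_inv, Complex.norm_real]
    exact inv_lt_one_of_one_lt₀ ha
  have hexp : ‖Complex.exp (-ξ * Complex.I)‖ = 1 := by
    rw [← Complex.ofReal_neg, Complex.norm_exp_ofReal_mul_I]
  have hcoeff := tendsto_geomProjCoeff hinv (z := Complex.exp (-ξ * Complex.I))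
    (by rwa [norm_mul, hexp, mul_one])
  rw [one_sub_div_one_sub_eq_Gfun_mul ha] at hcoeff
  rw [← errorAmplitude_eq_Gfun_mul ha]
  exact tendsto_errorAmplitude _ _ ℓ (hcoeff.comp hL) (hcoeff.comp hK)

end LimitAmplitude

section MainTheorem

variable {a ξ φ δ : ℝ} {L K : ℕ → ℕ} {u : ∀ N : ℕ, Fin (L N) → ℝ}

lemma tendsto_mul_succ_pow_div_pow_atTop_zero {r : ℝ} (hr : 1 < r) (c : ℝ) (k : ℕ) :
    Tendsto (fun n : ℕ => (c * (n + 1)) ^ k / r ^ n) atTop (𝓝 0) := by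
  have hshift := ((tendsto_pow_const_div_const_pow_of_one_lt k hr).comp
    (tendsto_add_atTop_nat 1)).const_mul (c ^ k * r)
  rw [mul_zero] at hshift
  refine hshift.congr fun n => ?_
  have hr_ne : r ≠ 0 := (one_pos.trans hr).ne'
  rw [Function.comp_apply, Nat.cast_succ, mul_pow, pow_succ]
  field_simp

lemma eventually_mul_succ_le_pow {r : ℝ} (hr : 1 < r) (c : ℝ) :
    ∀ᶠ n : ℕ in atTop, c * (n + 1) ≤ r ^ n := by
  filter_upwards [(tendsto_mul_succ_pow_div_pow_atTop_zero hr c 1).eventually_lt_const one_pos]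
    with n hn
  rw [div_lt_one (pow_pos (one_pos.trans hr) n), pow_one] at hn
  exact hn.le

lemma tendsto_recErr_sub_firstOrderError (ha : 1 < |a|)
    (hLK : ∀ᶠ N in atTop, L N + K N = N + 1)
    (hL : Tendsto L atTop atTop) (hK : Tendsto K atTop atTop)
    (hu : ∀ᶠ N in atTop, IsTopEigenvector (HdeltaSq a ξ φ δ (L N) (K N)) (u N)) (ℓ : ℕ) :
    Tendsto (fun N => recErr a ξ φ δ (L N) (K N) (u N) (N - 1 - ℓ)
        - δ * hankelize (firstOrderError a (cosNoise ξ φ) (L N) (K N)) (N - 1 - ℓ))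
      atTop (𝓝 0) := by
  have hpred : Tendsto (fun N : ℕ => N - 1) atTop atTop := tendsto_sub_atTop_nat 1
  have hbound : Tendsto (fun N : ℕ => 12 * ((|δ| * ((N - 1 : ℕ) + 1)) ^ 2 / |a| ^ (N - 1)))
      atTop (𝓝 0) := by
    simpa using ((tendsto_mul_succ_pow_div_pow_atTop_zero ha |δ| 2).comp hpred).const_mul 12
  refine squeeze_zero_norm' ?_ hbound
  filter_upwards [hLK, hu, hL.eventually_gt_atTop 0, hK.eventually_gt_atTop 0,
    eventually_ge_atTop 1, hpred.eventually (eventually_mul_succ_le_pow ha (2 * |δ|))]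
    with N hLKN huN hLN hKN hN hδN
  rw [mul_assoc] at hδN
  rw [← mul_div_assoc]
  exact abs_recErr_sub_firstOrderError_le (ne_zero_of_one_lt_abs ha) hLN hKN (by omega)
    (Nat.sub_le _ _) huN hδN

lemma exp_phase_eq_pow_mul (ξ φ : ℝ) {N : ℕ} (hN : 1 ≤ N) :
    Complex.exp ((ξ * (N - 1 : ℕ) + φ) * Complex.I)
      = Complex.exp (ξ * Complex.I) ^ N * Complex.exp ((φ - ξ) * Complex.I) := by
  rw [← Complex.exp_nat_mul, ← Complex.exp_add, Nat.cast_pred hN]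
  ring_nf

lemma tendsto_hankelize_firstOrderError_sub (ha : 1 < |a|) (ξ φ : ℝ)
    (hLK : ∀ᶠ N in atTop, L N + K N = N + 1)
    (hL : Tendsto L atTop atTop) (hK : Tendsto K atTop atTop) (ℓ : ℕ) :
    Tendsto (fun N => hankelize (firstOrderError a (cosNoise ξ φ) (L N) (K N)) (N - 1 - ℓ)
        - (Complex.exp (ξ * Complex.I) ^ N * (Complex.exp ((φ - ξ) * Complex.I)
            * (Gfun a ξ * (C1 a ξ ℓ - C2 a ξ ℓ * Complex.I)))).re)
      atTop (𝓝 0) := by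
  have hamplitude := tendsto_iff_norm_sub_tendsto_zero.1
    (tendsto_errorAmplitude_geomProjCoeff ha ξ ℓ hL hK)
  refine squeeze_zero_norm' ?_ hamplitude
  filter_upwards [hLK, hL.eventually_gt_atTop ℓ, hK.eventually_gt_atTop ℓ, eventually_ge_atTop 1]
    with N hLKN hLN hKN hN
  rw [hankelize_firstOrderError_eq_re (ne_zero_of_one_lt_abs ha)
      (fun m r hmr => cosNoise_eq_re ξ φ (n := N - 1) (by omega)) hLN hKN (by omega),
    exp_phase_eq_pow_mul ξ φ hN, ← Complex.sub_re, mul_assoc, ← mul_sub, ← mul_sub]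
  refine (Complex.abs_re_le_norm _).trans_eq ?_
  rw [norm_mul, norm_mul, norm_pow, Complex.norm_exp_ofReal_mul_I, ← Complex.ofReal_sub,
    Complex.norm_exp_ofReal_mul_I, one_pow, one_mul, one_mul]

theorem stmt_5_general (ha : 1 < |a|) (hξ : Real.sin ξ ≠ 0) (hδ : δ ≠ 0)
    (hLK : ∀ᶠ N in atTop, L N + K N = N + 1)
    (hL : Tendsto L atTop atTop) (hK : Tendsto K atTop atTop) (ℓ : ℕ)
    (hC : C1 a ξ ℓ ^ 2 + C2 a ξ ℓ ^ 2 > 0)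
    (hu : ∀ᶠ N in atTop, IsTopEigenvector (HdeltaSq a ξ φ δ (L N) (K N)) (u N)) :
    (∃ x y : ℝ, x ≠ y ∧
      MapClusterPt x atTop (fun N : ℕ => recErr a ξ φ δ (L N) (K N) (u N) (N - 1 - ℓ)) ∧
      MapClusterPt y atTop (fun N : ℕ => recErr a ξ φ δ (L N) (K N) (u N) (N - 1 - ℓ))) ∧
    ¬ ∃ l : ℝ, Tendsto (fun N : ℕ => recErr a ξ φ δ (L N) (K N) (u N) (N - 1 - ℓ))
        atTop (𝓝 l) := by
  have hC_ne : (C1 a ξ ℓ - C2 a ξ ℓ * Complex.I : ℂ) ≠ 0 := by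
    intro h
    have hre : C1 a ξ ℓ = 0 := by simpa using congrArg Complex.re h
    have him : C2 a ξ ℓ = 0 := by simpa using congrArg Complex.im h
    simp [hre, him] at hC
  have hw : (δ : ℂ) * (Complex.exp ((φ - ξ) * Complex.I)
      * (Gfun a ξ * (C1 a ξ ℓ - C2 a ξ ℓ * Complex.I))) ≠ 0 :=
    mul_ne_zero (Complex.ofReal_ne_zero.2 hδ) (mul_ne_zero (Complex.exp_ne_zero _)
      (mul_ne_zero (Complex.ofReal_ne_zero.2 (Gfun_ne_zero ha ξ)) hC_ne))
  refine exists_ne_mapClusterPt_of_tendsto_sub_re_pow_mul (Complex.norm_exp_ofReal_mul_I ξ)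
    (by rwa [Complex.exp_ofReal_mul_I_im]) hw ?_
  have hsum := (tendsto_recErr_sub_firstOrderError ha hLK hL hK hu ℓ).add
    ((tendsto_hankelize_firstOrderError_sub ha ξ φ hLK hL hK ℓ).const_mul δ)
  rw [mul_zero, add_zero] at hsum
  refine hsum.congr fun N => ?_
  rw [mul_left_comm (_ ^ N) (δ : ℂ), Complex.re_ofReal_mul]
  ring

end MainTheorem

/-- for rational frequency `ω = p/q` the sequence of last
reconstruction errors `N ↦ r_{N-1-ℓ}(N)` has at least two distinct cluster
points; in particular it does not converge. -/
theorem stmt_5 (a ξ φ α : ℝ) (ha : 1 < a) (hξ : ξ ∈ Set.Ioo 0 Real.pi)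
    (hφ : φ ∈ Set.Ico 0 (2 * Real.pi)) (hα : α ∈ Set.Ioo (0 : ℝ) 1)
    (L K : ℕ → ℕ)
    (hLK : ∀ N, 3 ≤ N → 1 < L N ∧ L N ≤ K N ∧ L N + K N = N + 1)
    (hlim : Tendsto (fun N : ℕ => (L N : ℝ) / (N : ℝ)) atTop (nhds α))
    (p q : ℕ) (hp : 0 < p) (hq : 0 < q) (hcop : Nat.Coprime p q) (hpq : 2 * p < q)
    (hξval : ξ = 2 * Real.pi * (p : ℝ) / (q : ℝ))
    (ℓ : ℕ) (δ : ℝ) (hδ : δ ≠ 0)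
    (hC : C1 a ξ ℓ ^ 2 + C2 a ξ ℓ ^ 2 > 0)
    (u : ∀ N : ℕ, Fin (L N) → ℝ)
    (hu : ∀ N, 3 ≤ N → IsTopEigenvector (HdeltaSq a ξ φ δ (L N) (K N)) (u N)) :
    (∃ x y : ℝ, x ≠ y ∧
      MapClusterPt x atTop (fun N : ℕ => recErr a ξ φ δ (L N) (K N) (u N) (N - 1 - ℓ)) ∧
      MapClusterPt y atTop (fun N : ℕ => recErr a ξ φ δ (L N) (K N) (u N) (N - 1 - ℓ))) ∧
    ¬ ∃ l : ℝ, Tendsto (fun N : ℕ => recErr a ξ φ δ (L N) (K N) (u N) (N - 1 - ℓ))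
        atTop (nhds l) := by
  have hsin : 0 < Real.sin ξ := Real.sin_pos_of_mem_Ioo hξ
  have hL : Tendsto L atTop atTop := tendsto_natCast_atTop_iff.1 <|
    (hlim.pos_mul_atTop hα.1 tendsto_natCast_atTop_atTop).congr' <| by
      filter_upwards [eventually_gt_atTop 0] with N hN
      exact div_mul_cancel₀ _ (Nat.cast_ne_zero.2 hN.ne')
  have hLK' := (eventually_ge_atTop 3).mono hLK
  have hK : Tendsto K atTop atTop := tendsto_atTop_mono' atTop (hLK'.mono fun _ h => h.2.1) hL
  exact stmt_5_general (ha.trans_le (le_abs_self a)) hsin.ne' hδ (hLK'.mono fun _ h => h.2.2) hL hK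
    ℓ hC ((eventually_ge_atTop 3).mono hu)
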